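/- arXiv:1003.0703 — 2 statements merged into one kernel-verified Lean document; each statement's English description precedes it below -/
import Mathlib

section
/- Let d ≥ 1, let H_{B₂} and H_R be finite-dimensional complex Hilbert spaces, and let ψ ∈ ℂ^d_A ⊗ (ℂ^d_{B₁} ⊗ H_{B₂}) ⊗ H_R be a unit vector of the form ψ = ∑_{x=0}^{d−1} √q_x |x̃⟩_A ⊗ |x̃⟩_{B₁} ⊗ |ϑ_x⟩_{B₂R}, where q is a probability distribution on {0,…,d−1} and the |ϑ_x⟩ ∈ H_{B₂} ⊗ H_R are unit vectors (this expresses the condition H(X^A|B) = 0). If p_secure(X^A|R) ≤ ε for some ε ≥ 0, then there exists a POVM (Λ_z)_{z=0}^{d−1} on H_B = ℂ^d_{B₁} ⊗ H_{B₂} with guessing probability ∑_z ⟨ψ| (|z⟩⟨z| ⊗ Λ_z ⊗ 1_R) |ψ⟩ ≥ 1 − √(2ε). -/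
open Matrix BigOperators Finset
open scoped Classical ComplexOrder

noncomputable section

/-- The positive semidefinite square root of a matrix (zero if the matrix is not PSD). -/
def psdSqrt {ι : Type*} [Fintype ι] [DecidableEq ι] (M : Matrix ι ι ℂ) : Matrix ι ι ℂ :=
  if h : M.PosSemidef then
    (h.1.eigenvectorUnitary : Matrix ι ι ℂ) *
      diagonal (((↑) : ℝ → ℂ) ∘ Real.sqrt ∘ h.1.eigenvalues) *
      (star h.1.eigenvectorUnitary : Matrix ι ι ℂ)
  else 0

/-- Trace norm ‖M‖₁ = Tr √(M†M). -/
def traceNorm {ι : Type*} [Fintype ι] [DecidableEq ι] (M : Matrix ι ι ℂ) : ℝ :=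
  ((psdSqrt (Mᴴ * M)).trace).re

/-- Trace distance D(ρ,σ) = ‖ρ−σ‖₁/2. -/
def traceDist {ι : Type*} [Fintype ι] [DecidableEq ι] (ρ σ : Matrix ι ι ℂ) : ℝ :=
  traceNorm (ρ - σ) / 2

/-- Fidelity F(ρ,σ) = ‖√ρ√σ‖₁. -/
def fidelity {ι : Type*} [Fintype ι] [DecidableEq ι] (ρ σ : Matrix ι ι ℂ) : ℝ :=
  traceNorm (psdSqrt ρ * psdSqrt σ)

/-- ω = exp(2πi/d). -/
def omega (d : ℕ) : ℂ := Complex.exp (2 * Real.pi * Complex.I / d)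

/-- Conjugate (X) basis vector |x̃⟩ of ℂ^d, component at z: ω^{−xz}/√d. -/
def xVec (d : ℕ) (x z : Fin d) : ℂ :=
  (starRingEnd ℂ) (omega d ^ (x.val * z.val)) / (Real.sqrt d : ℂ)

/-- Component of (⟨x̃|⊗1_{BR})|ψ⟩. -/
def condVecX {d : ℕ} {β r : Type*} [Fintype β] [Fintype r]
    (ψ : Fin d × β × r → ℂ) (x : Fin d) (p : β × r) : ℂ :=
  ∑ z, (starRingEnd ℂ) (xVec d x z) * ψ (z, p.1, p.2)

/-- Unnormalized conditional state ϑ_x^R = Tr_B[(⟨x̃|⊗1)|ψ⟩⟨ψ|(|x̃⟩⊗1)]. -/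
def thetaR {d : ℕ} {β r : Type*} [Fintype β] [Fintype r]
    (ψ : Fin d × β × r → ℂ) (x : Fin d) : Matrix r r ℂ :=
  Matrix.of fun s s' => ∑ b, condVecX ψ x (b, s) * (starRingEnd ℂ) (condVecX ψ x (b, s'))

/-- X-measured cq marginal ψ̄_X^{AR} = ∑_x |x̃⟩⟨x̃| ⊗ ϑ_x^R. -/
def cqMarginalX {d : ℕ} {β r : Type*} [Fintype β] [Fintype r]
    (ψ : Fin d × β × r → ℂ) : Matrix (Fin d × r) (Fin d × r) ℂ :=
  Matrix.of fun p q =>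
    ∑ x, xVec d x p.1 * (starRingEnd ℂ) (xVec d x q.1) * thetaR ψ x p.2 q.2

/-- Reduced state ψ^R = Tr_{AB}|ψ⟩⟨ψ|. -/
def reducedR {α β r : Type*} [Fintype α] [Fintype β] [Fintype r]
    (ψ : α × β × r → ℂ) : Matrix r r ℂ :=
  Matrix.of fun s s' => ∑ z, ∑ b, ψ (z, b, s) * (starRingEnd ℂ) (ψ (z, b, s'))

/-- The ideal key state (1/d) 1_A ⊗ ψ^R. -/
def idealKey {d : ℕ} {β r : Type*} [Fintype β] [Fintype r]
    (ψ : Fin d × β × r → ℂ) : Matrix (Fin d × r) (Fin d × r) ℂ :=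
  Matrix.of fun p q => (if p.1 = q.1 then ((d : ℂ))⁻¹ else 0) * reducedR ψ p.2 q.2

/-- Security parameter p_secure(X^A|R) = D(ψ̄_X^{AR}, (1/d)1⊗ψ^R). -/
def pSecure {d : ℕ} {β r : Type*} [Fintype β] [DecidableEq β] [Fintype r] [DecidableEq r]
    (ψ : Fin d × β × r → ℂ) : ℝ :=
  traceDist (cqMarginalX ψ) (idealKey ψ)

/-- Guessing probability ∑_z ⟨ψ|(|z⟩⟨z| ⊗ Λ_z ⊗ 1_R)|ψ⟩. -/
def pGuess {d : ℕ} {β r : Type*} [Fintype β] [Fintype r]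
    (ψ : Fin d × β × r → ℂ) (Λ : Fin d → Matrix β β ℂ) : ℝ :=
  (∑ z, ∑ b, ∑ b', ∑ s, (starRingEnd ℂ) (ψ (z, b, s)) * Λ z b b' * ψ (z, b', s)).re

end

/-
Write `θ_x` for `thetaR ψ x` and `ρ` for `reducedR ψ`. The Powers–Størmer inequality turns security
into a lower bound on the overlap of the square roots of the two states compared by `pSecure`. Both
are block diagonal in the conjugate basis, so the overlap is `Tr (G √(ρ / d))` with `G = ∑ x, √θ_x`.
On the other side, read the branch `√q_x |ϑ_x⟩` as an operator `N_x` from `B₂` to `R`. Then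
`θ_x = N_x N_xᴴ`, and polar decomposition gives a contraction `C_x` with `N_x C_x = √θ_x`. Applying
`C_x` coherently in `x`, which `B₁` supplies, is part of a measurement that guesses `z` with
probability at least `Tr (G Gᴴ) / d`. The Cauchy–Schwarz inequality compares the two quantities.
-/

open scoped MatrixOrder

theorem exists_le_and_sum_eq {ι M : Type*} [Fintype ι] [Nonempty ι] [AddCommGroup M]
    [PartialOrder M] [IsOrderedAddMonoid M] {f : ι → M} {a : M} (h : ∑ i, f i ≤ a) :
    ∃ g, f ≤ g ∧ ∑ i, g i = a := by
  classical
  let i₀ := Classical.arbitrary ι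
  refine ⟨f + Pi.single i₀ (a - ∑ i, f i), le_add_of_nonneg_right ?_, ?_⟩
  · exact Pi.single_nonneg.mpr (sub_nonneg.mpr h)
  · simp only [Pi.add_apply, sum_add_distrib, sum_pi_single', mem_univ, if_true,
      add_sub_cancel]

section TraceNorm

variable {n : Type*} [Fintype n]

theorem trace_mul_nonneg {A B : Matrix n n ℂ} (hA : 0 ≤ A) (hB : 0 ≤ B) :
    0 ≤ (A * B).trace := by
  obtain ⟨C, rfl⟩ := CStarAlgebra.nonneg_iff_eq_star_mul_self.mp hB
  rw [← Matrix.mul_assoc, trace_mul_comm, ← Matrix.mul_assoc]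
  exact (hA.posSemidef.mul_mul_conjTranspose_same C).trace_nonneg

theorem trace_mul_le_trace_mul_of_nonneg_right {A B C : Matrix n n ℂ} (h : A ≤ B) (hC : 0 ≤ C) :
    (A * C).trace ≤ (B * C).trace := by
  rw [← sub_nonneg, ← trace_sub, ← Matrix.sub_mul]
  exact trace_mul_nonneg (sub_nonneg.mpr h) hC

theorem norm_trace_mul_conjTranspose_sq_le (A B : Matrix n n ℂ) :
    ‖(A * Bᴴ).trace‖ ^ 2 ≤ (A * Aᴴ).trace.re * (B * Bᴴ).trace.re := by
  let := toMatrixSeminormedAddCommGroup (1 : Matrix n n ℂ) PosSemidef.one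
  let := toMatrixInnerProductSpace (1 : Matrix n n ℂ) PosSemidef.one
  have hinner (X Y : Matrix n n ℂ) : inner ℂ X Y = (Y * Xᴴ).trace :=
    congrArg (fun Z => (Z * Xᴴ).trace) (Matrix.mul_one Y)
  have cauchy_schwarz := inner_mul_inner_self_le (𝕜 := ℂ) B A
  rw [norm_inner_symm A B, ← sq] at cauchy_schwarz
  simpa only [hinner, mul_comm, RCLike.re_to_complex] using cauchy_schwarz

variable [DecidableEq n]

theorem psdSqrt_eq_cfcSqrt {M : Matrix n n ℂ} (hM : M.PosSemidef) : psdSqrt M = CFC.sqrt M := by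
  rw [CFC.sqrt_eq_real_sqrt M hM.nonneg, cfcₙ_eq_cfc, hM.1.cfc_eq, psdSqrt, dif_pos hM]
  rfl

theorem traceNorm_eq_re_trace_abs (M : Matrix n n ℂ) : traceNorm M = (CFC.abs M).trace.re := by
  rw [traceNorm, psdSqrt_eq_cfcSqrt (posSemidef_conjTranspose_mul_self M), CFC.abs,
    star_eq_conjTranspose]

theorem trace_mul_le_trace_abs {S M : Matrix n n ℂ} (hS : -1 ≤ S) (hS' : S ≤ 1)
    (hM : IsSelfAdjoint M) : (S * M).trace ≤ (CFC.abs M).trace := by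
  have hpos : (S * M⁺).trace ≤ (1 * M⁺).trace :=
    trace_mul_le_trace_mul_of_nonneg_right hS' (CFC.posPart_nonneg M)
  have hneg : (-S * M⁻).trace ≤ (1 * M⁻).trace :=
    trace_mul_le_trace_mul_of_nonneg_right (neg_le.mp hS) (CFC.negPart_nonneg M)
  calc (S * M).trace = (S * M⁺).trace + (-S * M⁻).trace := by
        rw [← trace_add, Matrix.neg_mul, ← sub_eq_add_neg, ← Matrix.mul_sub,
          CFC.posPart_sub_negPart M hM]
    _ ≤ (1 * M⁺).trace + (1 * M⁻).trace := add_le_add hpos hneg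
    _ = (CFC.abs M).trace := by
        rw [Matrix.one_mul, Matrix.one_mul, ← trace_add, CFC.posPart_add_negPart M hM]

theorem exists_mul_eq_abs {T : Matrix n n ℂ} (hT : IsSelfAdjoint T) :
    ∃ S : Matrix n n ℂ, -1 ≤ S ∧ S ≤ 1 ∧ S * T = CFC.abs T ∧ T * S = CFC.abs T := by
  let sgn : ℝ → ℝ := fun x => SignType.sign x
  have hcont : ContinuousOn sgn (spectrum ℝ T) := finite_real_spectrum.continuousOn sgn
  have habs : cfc sgn T * T = CFC.abs T := by
    nth_rw 2 [← cfc_id' ℝ T]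
    rw [← cfc_mul sgn _ T hcont, CFC.abs_eq_cfc_norm T]
    exact cfc_congr fun x _ => sign_mul_self x
  have hcomm : Commute (cfc sgn T) T := by
    simpa only [cfc_id' ℝ T] using cfc_commute_cfc sgn (fun x => x) T
  refine ⟨cfc sgn T, ?_, ?_, habs, hcomm.eq ▸ habs⟩
  · rw [← map_one (algebraMap ℝ (Matrix n n ℂ)), ← map_neg]
    exact algebraMap_le_cfc sgn (-1) T
      (fun x _ => by cases h : SignType.sign x <;> simp [sgn, h]) hcont
  · exact cfc_le_one sgn T fun x _ => by cases h : SignType.sign x <;> simp [sgn, h]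

theorem powers_stormer {A B : Matrix n n ℂ} (hA : 0 ≤ A) (hB : 0 ≤ B) :
    ((A - B) ^ 2).trace.re ≤ traceNorm (A ^ 2 - B ^ 2) := by
  have hA' : IsSelfAdjoint A := .of_nonneg hA
  have hB' : IsSelfAdjoint B := .of_nonneg hB
  have hT : IsSelfAdjoint (A - B) := hA'.sub hB'
  have hle : A - B ≤ CFC.abs (A - B) := by
    rw [← sub_nonneg, CFC.abs_sub_self (A - B)]
    exact nsmul_nonneg (CFC.negPart_nonneg _) 2
  have hneg_le : -(A - B) ≤ CFC.abs (A - B) := by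
    rw [neg_le_iff_add_nonneg, CFC.abs_add_self (A - B)]
    exact nsmul_nonneg (CFC.posPart_nonneg _) 2
  obtain ⟨S, hS, hS', hST, hTS⟩ := exists_mul_eq_abs hT
  rw [traceNorm_eq_re_trace_abs]
  refine (Complex.le_def.mp ?_).1
  calc ((A - B) ^ 2).trace
      = ((A - B) * A).trace + (-(A - B) * B).trace := by
        rw [← trace_add, Matrix.neg_mul, ← sub_eq_add_neg, ← Matrix.mul_sub, sq]
    _ ≤ (CFC.abs (A - B) * A).trace + (CFC.abs (A - B) * B).trace :=
        add_le_add (trace_mul_le_trace_mul_of_nonneg_right hle hA)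
          (trace_mul_le_trace_mul_of_nonneg_right hneg_le hB)
    _ = ((A - B) * S * A).trace + (S * (A - B) * B).trace := by rw [hST, hTS]
    _ = (S * (A ^ 2 - B ^ 2)).trace := by
        rw [Matrix.mul_assoc (A - B), trace_mul_comm (A - B), ← trace_add]
        congr 1
        noncomm_ring
    _ ≤ (CFC.abs (A ^ 2 - B ^ 2)).trace :=
        trace_mul_le_trace_abs hS hS' ((hA'.pow 2).sub (hB'.pow 2))

theorem half_trace_sub_traceDist_le {ρ σ : Matrix n n ℂ} (hρ : 0 ≤ ρ) (hσ : 0 ≤ σ) :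
    (ρ.trace.re + σ.trace.re) / 2 - traceDist ρ σ ≤ (CFC.sqrt ρ * CFC.sqrt σ).trace.re := by
  have h := powers_stormer (CFC.sqrt_nonneg ρ) (CFC.sqrt_nonneg σ)
  have hexpand : ((CFC.sqrt ρ - CFC.sqrt σ) ^ 2).trace =
      ρ.trace + σ.trace - 2 * (CFC.sqrt ρ * CFC.sqrt σ).trace := by
    rw [sq, Matrix.sub_mul, Matrix.mul_sub, Matrix.mul_sub, CFC.sqrt_mul_sqrt_self ρ,
      CFC.sqrt_mul_sqrt_self σ, trace_sub, trace_sub, trace_sub,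
      trace_mul_comm (CFC.sqrt σ)]
    ring
  rw [hexpand, CFC.sq_sqrt ρ, CFC.sq_sqrt σ] at h
  simp only [Complex.sub_re, Complex.add_re, Complex.mul_re, Complex.re_ofNat, Complex.im_ofNat,
    zero_mul, sub_zero] at h
  rw [traceDist]
  linarith

end TraceNorm

section Polar

variable {m n : Type*} [Fintype m] [Fintype n] [DecidableEq n]

theorem exists_mul_eq_sqrt_mul_conjTranspose (N : Matrix m n ℂ) :
    ∃ C : Matrix n m ℂ, N * C = CFC.sqrt (N * Nᴴ) ∧ C * Cᴴ ≤ 1 := by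
  set H := N * Nᴴ with hH_def
  have hH : 0 ≤ H := (posSemidef_self_mul_conjTranspose N).nonneg
  have hmul (f g : ℝ → ℝ) : cfc f H * cfc g H = cfc (fun x => f x * g x) H :=
    (cfc_mul f g H (finite_real_spectrum.continuousOn f)
      (finite_real_spectrum.continuousOn g)).symm
  let P := cfc (fun x : ℝ => (√x)⁻¹) H
  have hP : Pᴴ = P := (cfc_predicate (fun x : ℝ => (√x)⁻¹) H).star_eq
  have hHP : H * P = CFC.sqrt H := by
    nth_rw 1 [← cfc_id' ℝ H]
    rw [hmul, CFC.sqrt_eq_real_sqrt H, cfcₙ_eq_cfc]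
    exact cfc_congr fun x _ => by rw [← div_eq_mul_inv, Real.div_sqrt]
  have hproj : P * P * H * (P * P) = P * P := by
    nth_rw 1 [← cfc_id' ℝ H]
    simp only [P, hmul]
    refine cfc_congr fun x hx => ?_
    have hx0 : 0 ≤ x := spectrum_nonneg_of_nonneg hH hx
    rcases hx0.eq_or_lt with rfl | hpos
    · simp
    · field_simp
      rw [Real.sq_sqrt hx0]
  have hC : Nᴴ * P * (Nᴴ * P)ᴴ = Nᴴ * (P * P) * N := by
    simp only [conjTranspose_mul, conjTranspose_conjTranspose, hP, Matrix.mul_assoc]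
  refine ⟨Nᴴ * P, by rw [← Matrix.mul_assoc, hHP], IsStarProjection.le_one ⟨?_, ?_⟩⟩
  · rw [IsIdempotentElem, hC]
    calc Nᴴ * (P * P) * N * (Nᴴ * (P * P) * N) = Nᴴ * (P * P * H * (P * P)) * N := by
          simp only [hH_def, Matrix.mul_assoc]
      _ = Nᴴ * (P * P) * N := by rw [hproj]
  · exact (posSemidef_self_mul_conjTranspose _).1

end Polar

section ConjugateBasis

variable {d : ℕ}

theorem xVec_comm (x z : Fin d) : xVec d x z = xVec d z x := by
  rw [xVec, xVec, mul_comm x.val]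

theorem isPrimitiveRoot_omega [NeZero d] : IsPrimitiveRoot (omega d) d :=
  Complex.isPrimitiveRoot_exp d (NeZero.ne d)

theorem star_omega : star (omega d) = (omega d)⁻¹ := by
  rw [omega, ← Complex.exp_neg, Complex.star_def, ← Complex.exp_conj]
  simp [neg_div, Complex.conj_ofNat]

theorem xVec_mul_star (x y z : Fin d) :
    xVec d x z * star (xVec d y z) = (d : ℂ)⁻¹ * (omega d ^ y.val / omega d ^ x.val) ^ z.val := by
  have hd : (√(d : ℝ) : ℂ) * √(d : ℝ) = d := mod_cast Real.mul_self_sqrt d.cast_nonneg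
  have hconj : star (√(d : ℝ) : ℂ) = √(d : ℝ) := Complex.conj_ofReal _
  rw [xVec, xVec, starRingEnd_apply, starRingEnd_apply, star_div₀, star_star, hconj,
    div_mul_div_comm, hd, star_pow, star_omega, div_eq_inv_mul, pow_mul, pow_mul, ← mul_pow,
    inv_pow, inv_mul_eq_div (omega d ^ x.val)]

theorem xVec_mul_star_self [NeZero d] (x z : Fin d) :
    xVec d x z * star (xVec d x z) = (d : ℂ)⁻¹ := by
  have hω : omega d ≠ 0 := isPrimitiveRoot_omega.ne_zero (NeZero.ne d)
  rw [xVec_mul_star, div_self (pow_ne_zero _ hω), one_pow, mul_one]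

theorem sum_xVec_mul_star [NeZero d] (x y : Fin d) :
    ∑ z, xVec d x z * star (xVec d y z) = if x = y then 1 else 0 := by
  have hω : omega d ≠ 0 := isPrimitiveRoot_omega.ne_zero (NeZero.ne d)
  split_ifs with hxy
  · subst hxy
    simp only [xVec_mul_star_self, sum_const, card_univ, Fintype.card_fin, nsmul_eq_mul]
    exact mul_inv_cancel₀ (NeZero.ne _)
  · set ζ := omega d ^ y.val / omega d ^ x.val with hζ_def
    have hζ_ne_one : ζ ≠ 1 := fun h => hxy <| Fin.ext <|
      isPrimitiveRoot_omega.pow_inj x.isLt y.isLt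
        ((div_eq_one_iff_eq (pow_ne_zero _ hω)).mp h).symm
    have hζ_pow : ζ ^ d = 1 := by
      rw [div_pow, pow_right_comm, isPrimitiveRoot_omega.pow_eq_one, pow_right_comm,
        isPrimitiveRoot_omega.pow_eq_one, one_pow, one_pow, div_one]
    have hgeom : ∑ z : Fin d, ζ ^ z.val = 0 := by
      rw [Fin.sum_univ_eq_sum_range fun i => ζ ^ i]
      exact eq_zero_of_ne_zero_of_mul_right_eq_zero (sub_ne_zero.mpr hζ_ne_one)
        (by rw [geom_sum_mul, hζ_pow, sub_self])
    simp only [xVec_mul_star, ← Finset.mul_sum, ← hζ_def, hgeom, mul_zero]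

theorem sum_star_xVec_mul [NeZero d] (x y : Fin d) :
    ∑ z, star (xVec d x z) * xVec d y z = if x = y then 1 else 0 := by
  simpa only [mul_comm, eq_comm] using sum_xVec_mul_star y x

end ConjugateBasis

section OrthonormalFamilies

variable {ι κ l m n : Type*} [Fintype ι] [Fintype κ] [DecidableEq ι]

theorem sum_smul_sum_smul {u v : ι → κ → ℂ}
    (huv : ∀ x y, ∑ z, u x z * v y z = if x = y then 1 else 0) (A : ι → Matrix m n ℂ) (x : ι) :
    ∑ z, u x z • ∑ y, v y z • A y = A x := by
  simp only [smul_sum, smul_smul]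
  rw [sum_comm]
  simp only [← sum_smul, huv, ite_smul, one_smul, zero_smul, sum_ite_eq, mem_univ, if_true]

theorem sum_sum_smul_mul_conjTranspose [Fintype n] {u : ι → κ → ℂ}
    (hu : ∀ x y, ∑ z, u x z * star (u y z) = if x = y then 1 else 0)
    (A : ι → Matrix m n ℂ) (B : ι → Matrix l n ℂ) :
    ∑ z, (∑ x, u x z • A x) * (∑ y, u y z • B y)ᴴ = ∑ x, A x * (B x)ᴴ := by
  have hinv := sum_smul_sum_smul (v := star u) hu fun y => (B y)ᴴ
  calc ∑ z, (∑ x, u x z • A x) * (∑ y, u y z • B y)ᴴ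
      = ∑ x, A x * ∑ z, u x z • ∑ y, star (u y z) • (B y)ᴴ := by
        simp only [conjTranspose_sum, conjTranspose_smul, Matrix.sum_mul, Matrix.smul_mul]
        rw [sum_comm]
        simp only [Matrix.mul_sum, Matrix.mul_smul]
    _ = ∑ x, A x * (B x)ᴴ := sum_congr rfl fun x _ => congrArg (A x * ·) (hinv x)

end OrthonormalFamilies

section BlockSum

variable {ι l n : Type*} [Fintype ι] [Fintype n]

/-- The operator `∑ x, J x * R x * (J x)ᴴ`. When the `J x` are isometries with mutually orthogonal
ranges, this is the direct sum of the blocks `R x`; a classical-quantum state `∑ x, |x̃⟩⟨x̃| ⊗ R x`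
is the case `J x = |x̃⟩ ⊗ 1`. -/
def blockSum (J : ι → Matrix l n ℂ) (R : ι → Matrix n n ℂ) : Matrix l l ℂ :=
  ∑ x, J x * R x * (J x)ᴴ

theorem blockSum_nonneg [Finite l] (J : ι → Matrix l n ℂ) {R : ι → Matrix n n ℂ}
    (hR : ∀ x, 0 ≤ R x) : 0 ≤ blockSum J R :=
  sum_nonneg fun x _ => ((hR x).posSemidef.mul_mul_conjTranspose_same (J x)).nonneg

theorem blockSum_mono [Finite l] (J : ι → Matrix l n ℂ) {R S : ι → Matrix n n ℂ}
    (hRS : ∀ x, R x ≤ S x) :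
    blockSum J R ≤ blockSum J S := by
  rw [← sub_nonneg]
  convert blockSum_nonneg J fun x => sub_nonneg.mpr (hRS x)
  simp only [blockSum, Matrix.mul_sub, Matrix.sub_mul, sum_sub_distrib]

variable [Fintype l] [DecidableEq ι] [DecidableEq n] {J : ι → Matrix l n ℂ}

theorem trace_blockSum (hJ : ∀ x y, (J x)ᴴ * J y = if x = y then 1 else 0)
    (R : ι → Matrix n n ℂ) : (blockSum J R).trace = ∑ x, (R x).trace := by
  simp only [blockSum, trace_sum, trace_mul_cycle (J _), hJ, if_true, Matrix.one_mul]

theorem blockSum_mul_blockSum (hJ : ∀ x y, (J x)ᴴ * J y = if x = y then 1 else 0)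
    (R S : ι → Matrix n n ℂ) :
    blockSum J R * blockSum J S = blockSum J fun x => R x * S x := by
  have hblock (x y : ι) : J x * R x * (J x)ᴴ * (J y * S y * (J y)ᴴ) =
      if x = y then J x * (R x * S x) * (J x)ᴴ else 0 := by
    have hassoc : J x * R x * (J x)ᴴ * (J y * S y * (J y)ᴴ) =
        J x * (R x * ((J x)ᴴ * J y) * S y) * (J y)ᴴ := by
      simp only [Matrix.mul_assoc]
    rw [hassoc, hJ]
    split_ifs with hxy
    · rw [hxy, Matrix.mul_one]
    · simp only [Matrix.mul_zero, Matrix.zero_mul]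
  simp only [blockSum, Matrix.sum_mul, Matrix.mul_sum, hblock, sum_ite_eq', mem_univ, if_true]

theorem sqrt_blockSum (hJ : ∀ x y, (J x)ᴴ * J y = if x = y then 1 else 0)
    {R : ι → Matrix n n ℂ} (hR : ∀ x, 0 ≤ R x) :
    CFC.sqrt (blockSum J R) = blockSum J fun x => CFC.sqrt (R x) := by
  refine CFC.sqrt_unique ?_ (blockSum_nonneg J fun x => CFC.sqrt_nonneg (R x))
  rw [blockSum_mul_blockSum hJ]
  exact congrArg (blockSum J) <| funext fun x => CFC.sqrt_mul_sqrt_self (R x) (hR x)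

end BlockSum

section KetEmbed

variable {ι κ n : Type*} [DecidableEq n]

/-- The operator `|v⟩ ⊗ 1`, mapping `|t⟩` to `|v⟩ ⊗ |t⟩`. -/
def ketEmbed (n : Type*) [DecidableEq n] (v : κ → ℂ) : Matrix (κ × n) n ℂ :=
  Matrix.of fun p j => if p.2 = j then v p.1 else 0

variable [Fintype n]

theorem conjTranspose_ketEmbed_mul_ketEmbed [Fintype κ] (v w : κ → ℂ) :
    (ketEmbed n v)ᴴ * ketEmbed n w = (star v ⬝ᵥ w) • 1 := by
  ext i j
  rcases eq_or_ne i j with rfl | hij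
  · simp [ketEmbed, mul_apply, Fintype.sum_prod_type, dotProduct, apply_ite]
  · simp [ketEmbed, mul_apply, Fintype.sum_prod_type, hij.symm, hij, apply_ite]

theorem ketEmbed_mul_mul_conjTranspose_apply (v : κ → ℂ) (R : Matrix n n ℂ) (p q : κ × n) :
    (ketEmbed n v * R * (ketEmbed n v)ᴴ) p q = v p.1 * star (v q.1) * R p.2 q.2 := by
  simp only [ketEmbed, mul_apply, of_apply, conjTranspose_apply, apply_ite star, star_zero,
    mul_ite, mul_zero, ite_mul, zero_mul, sum_ite_eq, mem_univ, if_true]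
  ring

theorem blockSum_ketEmbed_const_apply [Fintype ι] [DecidableEq κ] {v : ι → κ → ℂ}
    (hv : ∀ a b, ∑ x, v x a * star (v x b) = if a = b then 1 else 0) (R : Matrix n n ℂ)
    (p q : κ × n) :
    blockSum (fun x => ketEmbed n (v x)) (fun _ => R) p q = if p.1 = q.1 then R p.2 q.2 else 0 := by
  simp only [blockSum, Matrix.sum_apply, ketEmbed_mul_mul_conjTranspose_apply, ← Finset.sum_mul, hv,
    ite_mul, one_mul, zero_mul]

theorem blockSum_ketEmbed_one [Fintype ι] [DecidableEq κ] {v : ι → κ → ℂ}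
    (hv : ∀ a b, ∑ x, v x a * star (v x b) = if a = b then 1 else 0) :
    blockSum (fun x => ketEmbed n (v x)) (fun _ => 1) = 1 := by
  ext p q
  simp only [blockSum_ketEmbed_const_apply hv, one_apply, Prod.ext_iff, ite_and]

end KetEmbed

section Amplitudes

variable {d : ℕ} {β r : Type*}

/-- The vector `v ∈ H_B ⊗ H_R` read as an operator from `B` to `R`. -/
def amplitudeMatrix (v : β × r → ℂ) : Matrix r β ℂ :=
  Matrix.of fun s b => v (b, s)

variable [Fintype β] [Fintype r]

theorem reducedR_eq_sum_amplitudeMatrix (ψ : Fin d × β × r → ℂ) :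
    reducedR ψ =
      ∑ z, amplitudeMatrix (Function.curry ψ z) * (amplitudeMatrix (Function.curry ψ z))ᴴ := by
  ext s s'
  rw [Matrix.sum_apply]
  rfl

theorem thetaR_eq_amplitudeMatrix (ψ : Fin d × β × r → ℂ) (x : Fin d) :
    thetaR ψ x = amplitudeMatrix (condVecX ψ x) * (amplitudeMatrix (condVecX ψ x))ᴴ :=
  rfl

theorem amplitudeMatrix_condVecX (ψ : Fin d × β × r → ℂ) (x : Fin d) :
    amplitudeMatrix (condVecX ψ x) =
      ∑ z, star (xVec d x z) • amplitudeMatrix (Function.curry ψ z) := by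
  ext s b
  rw [Matrix.sum_apply]
  rfl

theorem thetaR_nonneg (ψ : Fin d × β × r → ℂ) (x : Fin d) : 0 ≤ thetaR ψ x := by
  rw [thetaR_eq_amplitudeMatrix]
  exact (posSemidef_self_mul_conjTranspose _).nonneg

theorem reducedR_nonneg (ψ : Fin d × β × r → ℂ) : 0 ≤ reducedR ψ := by
  rw [reducedR_eq_sum_amplitudeMatrix]
  exact sum_nonneg fun z _ => (posSemidef_self_mul_conjTranspose _).nonneg

theorem sum_thetaR [NeZero d] (ψ : Fin d × β × r → ℂ) : ∑ x, thetaR ψ x = reducedR ψ := by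
  rw [reducedR_eq_sum_amplitudeMatrix]
  simp only [thetaR_eq_amplitudeMatrix, amplitudeMatrix_condVecX]
  exact sum_sum_smul_mul_conjTranspose (u := fun z x => star (xVec d x z))
    (fun z z' => by simpa only [star_star, xVec_comm] using sum_star_xVec_mul z z') _ _

theorem pGuess_transpose (ψ : Fin d × β × r → ℂ) (M : Fin d → Matrix β β ℂ) :
    pGuess ψ (fun z => (M z)ᵀ) = ∑ z, (amplitudeMatrix (Function.curry ψ z) * M z *
      (amplitudeMatrix (Function.curry ψ z))ᴴ).trace.re := by
  rw [pGuess, ← Complex.re_sum]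
  congr 1
  refine sum_congr rfl fun z _ => ?_
  simp only [trace, diag_apply, mul_apply, conjTranspose_apply, amplitudeMatrix, of_apply,
    transpose_apply, Finset.sum_mul, starRingEnd_apply, Function.curry_apply]
  rw [sum_comm_cycle]
  refine sum_congr rfl fun s _ => sum_congr rfl fun b _ => sum_congr rfl fun b' _ => ?_
  ring

theorem pGuess_transpose_mono (ψ : Fin d × β × r → ℂ) {M M' : Fin d → Matrix β β ℂ}
    (h : M ≤ M') : pGuess ψ (fun z => (M z)ᵀ) ≤ pGuess ψ (fun z => (M' z)ᵀ) := by
  simp only [pGuess_transpose]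
  refine sum_le_sum fun z _ => (Complex.le_def.mp ?_).1
  rw [← sub_nonneg, ← trace_sub, ← Matrix.sub_mul, ← Matrix.mul_sub]
  exact ((sub_nonneg.mpr (h z)).posSemidef.mul_mul_conjTranspose_same _).trace_nonneg

theorem pGuess_nonneg (ψ : Fin d × β × r → ℂ) {Λ : Fin d → Matrix β β ℂ}
    (hΛ : ∀ z, (Λ z).PosSemidef) : 0 ≤ pGuess ψ Λ := by
  have h := pGuess_transpose_mono ψ (M := 0) (M' := fun z => (Λ z)ᵀ)
    fun z => (hΛ z).transpose.nonneg
  simpa only [pGuess_transpose, Pi.zero_apply, Matrix.mul_zero, Matrix.zero_mul, trace_zero,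
    Complex.zero_re, sum_const_zero, transpose_transpose] using h

end Amplitudes

section Security

variable {d : ℕ} {β r : Type*} [Fintype β] [Fintype r] [DecidableEq r]

theorem cqMarginalX_eq_blockSum (ψ : Fin d × β × r → ℂ) :
    cqMarginalX ψ = blockSum (fun x => ketEmbed r (xVec d x)) (thetaR ψ) := by
  ext p q
  simp only [blockSum, Matrix.sum_apply, ketEmbed_mul_mul_conjTranspose_apply]
  rfl

variable [NeZero d]

theorem conjTranspose_ketEmbed_xVec_mul (x y : Fin d) :
    (ketEmbed r (xVec d x))ᴴ * ketEmbed r (xVec d y) = if x = y then 1 else 0 := by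
  rw [conjTranspose_ketEmbed_mul_ketEmbed, dotProduct]
  simp only [Pi.star_apply, sum_star_xVec_mul, ite_smul, one_smul, zero_smul]

theorem idealKey_eq_blockSum (ψ : Fin d × β × r → ℂ) :
    idealKey ψ =
      blockSum (fun x => ketEmbed r (xVec d x)) (fun _ => (d : ℂ)⁻¹ • reducedR ψ) := by
  ext p q
  rw [blockSum_ketEmbed_const_apply
    (fun a b => by simpa only [xVec_comm] using sum_xVec_mul_star a b)]
  simp only [idealKey, of_apply, ite_mul, zero_mul, Matrix.smul_apply, smul_eq_mul]

theorem trace_reducedR_sub_pSecure_le [DecidableEq β] (ψ : Fin d × β × r → ℂ) :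
    (reducedR ψ).trace.re - pSecure ψ ≤
      ((∑ x, CFC.sqrt (thetaR ψ x)) * CFC.sqrt ((d : ℂ)⁻¹ • reducedR ψ)).trace.re := by
  have hJ := conjTranspose_ketEmbed_xVec_mul (d := d) (r := r)
  have hρ : 0 ≤ (d : ℂ)⁻¹ • reducedR ψ := smul_nonneg (by positivity) (reducedR_nonneg ψ)
  have htrace_cq : (cqMarginalX ψ).trace = (reducedR ψ).trace := by
    rw [cqMarginalX_eq_blockSum, trace_blockSum hJ, ← trace_sum, sum_thetaR]
  have htrace_ideal : (idealKey ψ).trace = (reducedR ψ).trace := by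
    rw [idealKey_eq_blockSum, trace_blockSum hJ, sum_const, card_univ, Fintype.card_fin,
      trace_smul, nsmul_eq_mul, smul_eq_mul, mul_inv_cancel_left₀ (NeZero.ne _)]
  have hoverlap : (CFC.sqrt (cqMarginalX ψ) * CFC.sqrt (idealKey ψ)).trace =
      ((∑ x, CFC.sqrt (thetaR ψ x)) * CFC.sqrt ((d : ℂ)⁻¹ • reducedR ψ)).trace := by
    rw [cqMarginalX_eq_blockSum, idealKey_eq_blockSum, sqrt_blockSum hJ (thetaR_nonneg ψ),
      sqrt_blockSum hJ fun _ => hρ, blockSum_mul_blockSum hJ, trace_blockSum hJ, ← trace_sum,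
      Matrix.sum_mul]
  have hcq_nonneg : 0 ≤ cqMarginalX ψ :=
    cqMarginalX_eq_blockSum ψ ▸ blockSum_nonneg _ (thetaR_nonneg ψ)
  have hideal_nonneg : 0 ≤ idealKey ψ :=
    idealKey_eq_blockSum ψ ▸ blockSum_nonneg _ fun _ => hρ
  have h := half_trace_sub_traceDist_le hcq_nonneg hideal_nonneg
  rwa [htrace_cq, htrace_ideal, hoverlap, add_self_div_two] at h

end Security

section CorrelatedState

variable {d : ℕ} {β₂ r : Type*} [Fintype β₂]

/-- The vector `∑ x, |x̃⟩_A ⊗ |x̃⟩_{B₁} ⊗ |φ x⟩_{B₂R}`; the branches `φ x` are not normalised. -/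
noncomputable def correlatedState (φ : Fin d → β₂ × r → ℂ) : Fin d × (Fin d × β₂) × r → ℂ :=
  fun p => ∑ x, xVec d x p.1 * xVec d x p.2.1.1 * φ x (p.2.1.2, p.2.2)

theorem amplitudeMatrix_correlatedState [DecidableEq β₂] (φ : Fin d → β₂ × r → ℂ) (z : Fin d) :
    amplitudeMatrix (Function.curry (correlatedState φ) z) =
      ∑ x, xVec d x z • (amplitudeMatrix (φ x) * (ketEmbed β₂ (star (xVec d x)))ᴴ) := by
  ext s b
  simp only [amplitudeMatrix, correlatedState, ketEmbed, Function.curry_apply, of_apply,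
    Matrix.sum_apply, Matrix.smul_apply, smul_eq_mul, mul_apply, conjTranspose_apply,
    apply_ite star, star_zero, Pi.star_apply, star_star, mul_ite, mul_zero, sum_ite_eq,
    mem_univ, if_true]
  exact sum_congr rfl fun x _ => by ring

variable [NeZero d]

theorem conjTranspose_ketEmbed_star_xVec_mul [DecidableEq β₂] (x y : Fin d) :
    (ketEmbed β₂ (star (xVec d x)))ᴴ * ketEmbed β₂ (star (xVec d y)) = if x = y then 1 else 0 := by
  rw [conjTranspose_ketEmbed_mul_ketEmbed, dotProduct]
  simp only [Pi.star_apply, star_star, sum_xVec_mul_star, ite_smul, one_smul, zero_smul]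

variable [Fintype r]

theorem thetaR_correlatedState (φ : Fin d → β₂ × r → ℂ) (x : Fin d) :
    thetaR (correlatedState φ) x = amplitudeMatrix (φ x) * (amplitudeMatrix (φ x))ᴴ := by
  have hcond : amplitudeMatrix (condVecX (correlatedState φ) x) =
      amplitudeMatrix (φ x) * (ketEmbed β₂ (star (xVec d x)))ᴴ := by
    simp only [amplitudeMatrix_condVecX, amplitudeMatrix_correlatedState]
    exact sum_smul_sum_smul (u := fun x z => star (xVec d x z)) sum_star_xVec_mul _ x
  rw [thetaR_eq_amplitudeMatrix, hcond, conjTranspose_mul, conjTranspose_conjTranspose,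
    Matrix.mul_assoc, ← Matrix.mul_assoc _ _ (amplitudeMatrix (φ x))ᴴ,
    conjTranspose_ketEmbed_star_xVec_mul, if_pos rfl, Matrix.one_mul]

theorem trace_reducedR_correlatedState (φ : Fin d → β₂ × r → ℂ) :
    (reducedR (correlatedState φ)).trace.re = ∑ x, ∑ t, ‖φ x t‖ ^ 2 := by
  have hbranch (x : Fin d) :
      (amplitudeMatrix (φ x) * (amplitudeMatrix (φ x))ᴴ).trace.re = ∑ t, ‖φ x t‖ ^ 2 := by
    simp only [trace, diag_apply, mul_apply, conjTranspose_apply, amplitudeMatrix, of_apply,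
      Complex.star_def, Complex.mul_conj', Complex.re_sum, Fintype.sum_prod_type]
    rw [sum_comm]
    norm_cast
  simp only [← sum_thetaR, thetaR_correlatedState, trace_sum, Complex.re_sum, hbranch]

end CorrelatedState

section Decoder

variable {d : ℕ} {β₂ r : Type*} [Fintype β₂] [DecidableEq β₂]

/-- The measurement amplitudes `∑ x, ⟨x̃|z⟩ |x̃*⟩ ⊗ C x`, for which `B₁` supplies the index `x`
coherently and `C x` acts on `B₂`. The conjugate `|x̃*⟩` of `|x̃⟩` appears since `amplitudeMatrix`
transposes the `B` factor. -/
noncomputable def decoder (C : Fin d → Matrix β₂ r ℂ) (z : Fin d) : Matrix (Fin d × β₂) r ℂ :=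
  ∑ x, star (xVec d x z) • (ketEmbed β₂ (star (xVec d x)) * C x)

variable [NeZero d]

theorem sum_decoder_mul_conjTranspose_le_one [Fintype r] {C : Fin d → Matrix β₂ r ℂ}
    (hC : ∀ x, C x * (C x)ᴴ ≤ 1) : ∑ z, decoder C z * (decoder C z)ᴴ ≤ 1 := by
  let J : Fin d → Matrix (Fin d × β₂) β₂ ℂ := fun x => ketEmbed β₂ (star (xVec d x))
  calc ∑ z, decoder C z * (decoder C z)ᴴ = ∑ x, J x * C x * (J x * C x)ᴴ :=
        sum_sum_smul_mul_conjTranspose (u := fun x z => star (xVec d x z))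
          (fun x y => by simpa only [star_star] using sum_star_xVec_mul x y) _ _
    _ = blockSum J fun x => C x * (C x)ᴴ := by
        simp only [blockSum, conjTranspose_mul, Matrix.mul_assoc]
    _ ≤ blockSum J fun _ => 1 := blockSum_mono J hC
    _ = 1 := blockSum_ketEmbed_one fun a b => by
        simpa only [Pi.star_apply, star_star, xVec_comm] using sum_star_xVec_mul a b

/-- Mutual unbiasedness enters here: `|⟨x̃|z⟩|² = 1 / d` gives all branches the same weight. -/
theorem amplitudeMatrix_correlatedState_mul_decoder (φ : Fin d → β₂ × r → ℂ)
    (C : Fin d → Matrix β₂ r ℂ) (z : Fin d) :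
    amplitudeMatrix (Function.curry (correlatedState φ) z) * decoder C z =
      (d : ℂ)⁻¹ • ∑ x, amplitudeMatrix (φ x) * C x := by
  have hbranch (x y : Fin d) : amplitudeMatrix (φ x) * (ketEmbed β₂ (star (xVec d x)))ᴴ *
      (ketEmbed β₂ (star (xVec d y)) * C y) =
        if x = y then amplitudeMatrix (φ x) * C x else 0 := by
    rw [Matrix.mul_assoc, ← Matrix.mul_assoc _ _ (C y), conjTranspose_ketEmbed_star_xVec_mul]
    split_ifs with hxy
    · rw [hxy, Matrix.one_mul]
    · rw [Matrix.zero_mul, Matrix.mul_zero]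
  simp only [amplitudeMatrix_correlatedState, decoder, Matrix.sum_mul, Matrix.mul_sum,
    Matrix.smul_mul, Matrix.mul_smul, hbranch, smul_ite, smul_zero, sum_ite_eq',
    mem_univ, if_true, smul_smul, smul_sum, xVec_mul_star_self, mul_comm (star _)]

theorem exists_decoder [Fintype r] (φ : Fin d → β₂ × r → ℂ) :
    ∃ L : Fin d → Matrix (Fin d × β₂) r ℂ, ∑ z, L z * (L z)ᴴ ≤ 1 ∧
      ∀ z, amplitudeMatrix (Function.curry (correlatedState φ) z) * L z =
        (d : ℂ)⁻¹ • ∑ x, CFC.sqrt (thetaR (correlatedState φ) x) := by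
  choose C hNC hC using fun x => exists_mul_eq_sqrt_mul_conjTranspose (amplitudeMatrix (φ x))
  refine ⟨decoder C, sum_decoder_mul_conjTranspose_le_one hC, fun z => ?_⟩
  simp only [amplitudeMatrix_correlatedState_mul_decoder, hNC, thetaR_correlatedState]

end Decoder

section Recovery

variable {d : ℕ} [NeZero d] {β₂ r : Type*} [Fintype β₂] [DecidableEq β₂] [Fintype r]

theorem exists_povm_le_pGuess (φ : Fin d → β₂ × r → ℂ) :
    ∃ Λ : Fin d → Matrix (Fin d × β₂) (Fin d × β₂) ℂ, (∀ z, (Λ z).PosSemidef) ∧ ∑ z, Λ z = 1 ∧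
      (d : ℝ)⁻¹ * ((∑ x, CFC.sqrt (thetaR (correlatedState φ) x)) *
        (∑ x, CFC.sqrt (thetaR (correlatedState φ) x))ᴴ).trace.re ≤
          pGuess (correlatedState φ) Λ := by
  obtain ⟨L, hL, hΨL⟩ := exists_decoder φ
  obtain ⟨M, hLM, hM⟩ := exists_le_and_sum_eq hL
  refine ⟨fun z => (M z)ᵀ, fun z => ?_, ?_, ?_⟩
  · exact ((posSemidef_self_mul_conjTranspose (L z)).nonneg.trans (hLM z)).posSemidef.transpose
  · rw [← transpose_sum, hM, transpose_one]
  set G := ∑ x, CFC.sqrt (thetaR (correlatedState φ) x)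
  let Ψ := fun z => amplitudeMatrix (Function.curry (correlatedState φ) z)
  have hd : (d : ℝ) ≠ 0 := NeZero.ne _
  calc (d : ℝ)⁻¹ * (G * Gᴴ).trace.re
      = ∑ z, (Ψ z * L z * (Ψ z * L z)ᴴ).trace.re := by
        have hcast : (d : ℂ)⁻¹ = ((d : ℝ)⁻¹ : ℝ) := by simp
        simp only [Ψ, hΨL, conjTranspose_smul, Matrix.smul_mul, Matrix.mul_smul, trace_smul,
          smul_eq_mul, hcast, Complex.star_def, Complex.conj_ofReal, Complex.re_ofReal_mul,
          sum_const, card_univ, Fintype.card_fin, nsmul_eq_mul]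
        rw [mul_inv_cancel_left₀ hd]
    _ = pGuess (correlatedState φ) fun z => (L z * (L z)ᴴ)ᵀ := by
        rw [pGuess_transpose]
        simp only [Ψ, conjTranspose_mul, Matrix.mul_assoc]
    _ ≤ pGuess (correlatedState φ) fun z => (M z)ᵀ := pGuess_transpose_mono _ hLM

theorem secure_implies_recoverable_caseA_general [DecidableEq r] (φ : Fin d → β₂ × r → ℂ) :
    ∃ Λ : Fin d → Matrix (Fin d × β₂) (Fin d × β₂) ℂ, (∀ z, (Λ z).PosSemidef) ∧ ∑ z, Λ z = 1 ∧
      (∑ x, ∑ t, ‖φ x t‖ ^ 2) - pSecure (correlatedState φ) ≤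
        √((∑ x, ∑ t, ‖φ x t‖ ^ 2) * pGuess (correlatedState φ) Λ) := by
  obtain ⟨Λ, hpos, hsum, hguess⟩ := exists_povm_le_pGuess φ
  refine ⟨Λ, hpos, hsum, ?_⟩
  set ψ := correlatedState φ
  set G := ∑ x, CFC.sqrt (thetaR ψ x)
  set S := CFC.sqrt ((d : ℂ)⁻¹ • reducedR ψ) with hS_def
  have hSS : (S * Sᴴ).trace.re = (d : ℝ)⁻¹ * (reducedR ψ).trace.re := by
    have hcast : (d : ℂ)⁻¹ = ((d : ℝ)⁻¹ : ℝ) := by simp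
    rw [(CFC.sqrt_nonneg _).posSemidef.1, hS_def, CFC.sqrt_mul_sqrt_self _
      (smul_nonneg (by positivity) (reducedR_nonneg ψ)), trace_smul, hcast, smul_eq_mul,
      Complex.re_ofReal_mul]
  rw [← trace_reducedR_correlatedState]
  calc (reducedR ψ).trace.re - pSecure ψ
      ≤ (G * S).trace.re := trace_reducedR_sub_pSecure_le ψ
    _ ≤ ‖(G * Sᴴ).trace‖ := by
        rw [(CFC.sqrt_nonneg _).posSemidef.1]
        exact Complex.re_le_norm _
    _ ≤ √((G * Gᴴ).trace.re * (S * Sᴴ).trace.re) :=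
        Real.le_sqrt_of_sq_le (norm_trace_mul_conjTranspose_sq_le G S)
    _ ≤ √((reducedR ψ).trace.re * pGuess ψ Λ) := by
        rw [hSS, mul_comm (G * Gᴴ).trace.re, mul_comm (d : ℝ)⁻¹, mul_assoc]
        gcongr
        exact (Complex.le_def.mp (reducedR_nonneg ψ).posSemidef.trace_nonneg).1

end Recovery

theorem one_sub_sqrt_two_mul_le {ε p : ℝ} (hp : 0 ≤ p) (h : 1 - ε ≤ √p) :
    1 - √(2 * ε) ≤ p := by
  set u := √(2 * ε)
  have hu_nonneg : 0 ≤ u := Real.sqrt_nonneg _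
  have hε : 2 * ε ≤ u ^ 2 := by
    rw [Real.sq_sqrt']
    exact le_max_left _ _
  rcases le_total u 1 with hu | hu
  · calc 1 - u ≤ (1 - u ^ 2 / 2) ^ 2 := by nlinarith [sq_nonneg (u ^ 2)]
      _ ≤ √p ^ 2 := pow_le_pow_left₀ (by nlinarith) (by linarith) 2
      _ = p := Real.sq_sqrt hp
  · linarith

/-- If H(X^A|B)=0 (the state has the form ∑_x √q_x |x̃⟩_A|x̃⟩_{B₁}|ϑ_x⟩_{B₂R})
and X^A is ε-secure against R, then Z^A is √(2ε)-recoverable from B = B₁B₂. -/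
theorem secure_implies_recoverable_caseA {d : ℕ} (hd : 1 ≤ d)
    {β₂ r : Type*} [Fintype β₂] [DecidableEq β₂] [Fintype r] [DecidableEq r]
    (q : Fin d → ℝ) (hq0 : ∀ x, 0 ≤ q x) (hq1 : ∑ x, q x = 1)
    (ϑ : Fin d → β₂ × r → ℂ) (hϑ : ∀ x, ∑ t, ‖ϑ x t‖ ^ 2 = 1)
    (ψ : Fin d × (Fin d × β₂) × r → ℂ)
    (hform : ∀ a b₁ b₂ s, ψ (a, (b₁, b₂), s)
        = ∑ x, (Real.sqrt (q x) : ℂ) * xVec d x a * xVec d x b₁ * ϑ x (b₂, s))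
    (ε : ℝ) (hε0 : 0 ≤ ε)
    (hsec : pSecure ψ ≤ ε) :
    ∃ Λ : Fin d → Matrix (Fin d × β₂) (Fin d × β₂) ℂ,
      (∀ z, (Λ z).PosSemidef) ∧ (∑ z, Λ z = 1) ∧
      1 - Real.sqrt (2 * ε) ≤ pGuess ψ Λ := by
  have : NeZero d := ⟨Nat.one_le_iff_ne_zero.mp hd⟩
  let φ : Fin d → β₂ × r → ℂ := fun x t => √(q x) * ϑ x t
  have hψ : ψ = correlatedState φ := funext fun ⟨a, ⟨b₁, b₂⟩, s⟩ =>
    (hform a b₁ b₂ s).trans <| sum_congr rfl fun x _ => by ring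
  have hnorm : ∑ x, ∑ t, ‖φ x t‖ ^ 2 = 1 := by
    simp only [φ, norm_mul, mul_pow, Complex.norm_real, Real.norm_eq_abs, sq_abs,
      Real.sq_sqrt (hq0 _), ← Finset.mul_sum, hϑ, mul_one, hq1]
  obtain ⟨Λ, hpos, hsum, hguess⟩ := secure_implies_recoverable_caseA_general φ
  rw [hnorm, one_mul, ← hψ] at hguess
  exact ⟨Λ, hpos, hsum,
    one_sub_sqrt_two_mul_le (pGuess_nonneg ψ hpos) (by linarith)⟩
end

section
/- Let d ≥ 1, let p be a probability distribution on {0,…,d−1}, let |φ_z⟩ ∈ H_B ⊗ H_R be unit vectors, and let (Λ_z)_{z=0}^{d−1} be a POVM on H_B. Define in ℂ^d_A ⊗ ℂ^d_M ⊗ H_B ⊗ H_R the vectors ψ' = ∑_{z,z'} √p_z |z⟩_A ⊗ |z'⟩_M ⊗ (√Λ_{z'} ⊗ 1_R)|φ_z⟩ and ξ = ∑_z √p_z |z⟩_A ⊗ |z⟩_M ⊗ |φ_z⟩. Then ψ' is a unit vector, the inner product ⟨ξ, ψ'⟩ equals ∑_z p_z ⟨φ_z| (√Λ_z ⊗ 1_R)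 |φ_z⟩, which is a real number, and it satisfies ⟨ξ, ψ'⟩ ≥ ∑_z p_z ⟨φ_z| (Λ_z ⊗ 1_R) |φ_z⟩ (the guessing probability of the POVM). -/
open Matrix BigOperators Finset
open scoped Classical ComplexOrder

/-!
The coherent measurement `∑_m |m⟩ ⊗ √Λ_m` is an isometry because `∑_m √Λ_m √Λ_m = ∑_m Λ_m = 1`.
The ideal state `ξ` carries a copy of `z` in the outcome register, so the inner product with `ψ'`
retains only the terms with outcome `m = z`, that is, the expectations of `√Λ_z ⊗ 1`. Completeness
gives `0 ≤ Λ_z ≤ 1`, and `x ≤ √x` on `[0, 1]` lifts through the functional calculus to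
`Λ_z ≤ √Λ_z`. The overlap thus exceeds the guessing probability in the order of `ℂ`, where being
at least a nonnegative number includes being real.
-/

open scoped MatrixOrder Kronecker

section SquareRoot

variable {ι : Type*} [Fintype ι] [DecidableEq ι] {M : Matrix ι ι ℂ}

lemma psdSqrt_eq_cfc (hM : 0 ≤ M) : psdSqrt M = cfc Real.sqrt M := by
  have hM' := nonneg_iff_posSemidef.mp hM
  rw [psdSqrt, dif_pos hM', hM'.1.cfc_eq]
  rfl

lemma psdSqrt_nonneg (hM : 0 ≤ M) : 0 ≤ psdSqrt M := by
  rw [psdSqrt_eq_cfc hM]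
  exact cfc_nonneg fun x _ => Real.sqrt_nonneg x

lemma psdSqrt_mul_self (hM : 0 ≤ M) : psdSqrt M * psdSqrt M = M := by
  have hspec : Set.EqOn (fun x => √x * √x) id (spectrum ℝ M) := fun x hx =>
    Real.mul_self_sqrt (spectrum_nonneg_of_nonneg hM hx)
  rw [psdSqrt_eq_cfc hM, ← cfc_mul Real.sqrt Real.sqrt M, cfc_congr hspec, cfc_id ℝ M]

lemma le_psdSqrt_of_le_one (hM : 0 ≤ M) (hM1 : M ≤ 1) : M ≤ psdSqrt M := by
  have hspec : ∀ x ∈ spectrum ℝ M, x ≤ √x := fun x hx =>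
    Real.le_sqrt_of_sq_le <| pow_le_of_le_one (spectrum_nonneg_of_nonneg hM hx)
      ((CFC.le_one_iff M).mp hM1 x hx) two_ne_zero
  rw [psdSqrt_eq_cfc hM]
  conv_lhs => rw [← cfc_id ℝ M]
  exact cfc_mono hspec

end SquareRoot

lemma star_dotProduct_self_eq_sum_norm_sq {ι 𝕜 : Type*} [Fintype ι] [RCLike 𝕜] (v : ι → 𝕜) :
    star v ⬝ᵥ v = ((∑ i, ‖v i‖ ^ 2 : ℝ) : 𝕜) := by
  simp [dotProduct, RCLike.conj_mul]

lemma kronecker_one_mulVec_apply {l m n R : Type*} [Fintype m] [Fintype n] [DecidableEq n]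
    [NonAssocSemiring R] (M : Matrix l m R) (v : m × n → R) (i : l) (k : n) :
    ((M ⊗ₖ (1 : Matrix n n R)) *ᵥ v) (i, k) = ∑ j, M i j * v (j, k) := by
  simp [mulVec, dotProduct, Fintype.sum_prod_type, one_apply]

section LocalExpectation

variable {β r : Type*} [Fintype β] [Fintype r] [DecidableEq r]

/-- The expectation `⟨v|(M ⊗ 1)|v⟩` of an operator `M` acting on the first factor of a bipartite
system in the vector `v`. -/
def localExpectation (M : Matrix β β ℂ) (v : β × r → ℂ) : ℂ :=
  star v ⬝ᵥ ((M ⊗ₖ (1 : Matrix r r ℂ)) *ᵥ v)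

lemma localExpectation_eq_sum (M : Matrix β β ℂ) (v : β × r → ℂ) :
    localExpectation M v =
      ∑ b, ∑ b', ∑ s, (starRingEnd ℂ) (v (b, s)) * M b b' * v (b', s) := by
  simp only [localExpectation, dotProduct, Fintype.sum_prod_type, kronecker_one_mulVec_apply,
    Finset.mul_sum, ← mul_assoc]
  exact Finset.sum_congr rfl fun b _ => Finset.sum_comm

lemma localExpectation_mono {M N : Matrix β β ℂ} (hMN : M ≤ N) (v : β × r → ℂ) :
    localExpectation M v ≤ localExpectation N v := by
  have hpos : ((N - M) ⊗ₖ (1 : Matrix r r ℂ)).PosSemidef := (le_iff.mp hMN).kronecker .one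
  have hsub : (N - M) ⊗ₖ (1 : Matrix r r ℂ) = N ⊗ₖ 1 - M ⊗ₖ 1 := by
    ext; simp [sub_mul]
  simpa [localExpectation, hsub, sub_mulVec] using hpos.dotProduct_mulVec_nonneg v

lemma localExpectation_nonneg {M : Matrix β β ℂ} (hM : 0 ≤ M) (v : β × r → ℂ) :
    0 ≤ localExpectation M v := by
  simpa [localExpectation] using localExpectation_mono hM v

lemma localExpectation_sum {κ : Type*} [Fintype κ] (M : κ → Matrix β β ℂ) (v : β × r → ℂ) :
    localExpectation (∑ k, M k) v = ∑ k, localExpectation (M k) v := by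
  have hsum : (∑ k, M k) ⊗ₖ (1 : Matrix r r ℂ) = ∑ k, M k ⊗ₖ 1 := by
    ext; simp [Matrix.sum_apply, Finset.sum_mul]
  simp [localExpectation, hsum, sum_mulVec, dotProduct_sum]

lemma localExpectation_smul (M : Matrix β β ℂ) (c : ℂ) (v : β × r → ℂ) :
    localExpectation M (c • v) = (‖c‖ ^ 2 : ℝ) * localExpectation M v := by
  simp [localExpectation, mulVec_smul, ← mul_assoc, Complex.mul_conj']

lemma localExpectation_one [DecidableEq β] (v : β × r → ℂ) :
    localExpectation 1 v = ((∑ t, ‖v t‖ ^ 2 : ℝ) : ℂ) := by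
  rw [localExpectation, one_kronecker_one, one_mulVec]
  exact star_dotProduct_self_eq_sum_norm_sq v

lemma localExpectation_conjTranspose_mul_self {γ : Type*} [Fintype γ] (A : Matrix γ β ℂ)
    (v : β × r → ℂ) :
    localExpectation (Aᴴ * A) v =
      ((∑ t, ‖((A ⊗ₖ (1 : Matrix r r ℂ)) *ᵥ v) t‖ ^ 2 : ℝ) : ℂ) := by
  have hmul : (Aᴴ * A) ⊗ₖ (1 : Matrix r r ℂ) =
      (A ⊗ₖ (1 : Matrix r r ℂ))ᴴ * (A ⊗ₖ (1 : Matrix r r ℂ)) := by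
    rw [conjTranspose_kronecker, ← mul_kronecker_mul, conjTranspose_one, Matrix.mul_one]
  rw [localExpectation, hmul, ← mulVec_mulVec, dotProduct_mulVec, ← star_mulVec]
  exact star_dotProduct_self_eq_sum_norm_sq _

end LocalExpectation

section CoherentSuperposition

variable {α τ : Type*}

/-- The state `∑_z √p_z |z⟩ ⊗ |φ_z⟩` superposing the vectors `φ_z` coherently. -/
noncomputable def coherentSuperposition (p : α → ℝ) (φ : α → τ → ℂ) : α × τ → ℂ :=
  fun t => (√(p t.1) : ℂ) * φ t.1 t.2

lemma sum_norm_sq_coherentSuperposition [Fintype α] [Fintype τ] {p : α → ℝ}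
    (hp : ∀ z, 0 ≤ p z) (φ : α → τ → ℂ) :
    ∑ t, ‖coherentSuperposition p φ t‖ ^ 2 = ∑ z, p z * ∑ t, ‖φ z t‖ ^ 2 := by
  simp [coherentSuperposition, Fintype.sum_prod_type, mul_pow, Finset.mul_sum, Real.sq_sqrt, hp]

lemma localExpectation_coherentSuperposition {β r : Type*} [Fintype β] [Fintype r]
    [DecidableEq r] {p : α → ℝ} (hp : ∀ z, 0 ≤ p z) (φ : α → β × r → ℂ) (M : Matrix β β ℂ) (z : α) :
    localExpectation M (fun x => coherentSuperposition p φ (z, x)) =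
      p z * localExpectation M (φ z) := by
  have h := localExpectation_smul M (√(p z) : ℂ) (φ z)
  rwa [Complex.norm_real, Real.norm_eq_abs, sq_abs, Real.sq_sqrt (hp z)] at h

end CoherentSuperposition

section CoherentMeasurement

variable {α κ β r : Type*} [Fintype β] [DecidableEq β] [Fintype r] [DecidableEq r]

/-- The state obtained from `ψ` by copying the basis register `A` into an adjoined register `M`,
placed second. -/
def coherentCopy {τ : Type*} [DecidableEq α] (ψ : α × τ → ℂ) : α × α × τ → ℂ :=
  fun t => if t.2.1 = t.1 then ψ (t.1, t.2.2) else 0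

/-- The state obtained from `ψ` by measuring the POVM `Λ` on system `B` through the isometry
`∑_m |m⟩ ⊗ √Λ_m`, whose outcome register `M` is placed second. -/
noncomputable def coherentMeasurement (Λ : κ → Matrix β β ℂ) (ψ : α × β × r → ℂ) :
    α × κ × β × r → ℂ :=
  fun t => ((psdSqrt (Λ t.2.1) ⊗ₖ (1 : Matrix r r ℂ)) *ᵥ fun x => ψ (t.1, x)) t.2.2

lemma sum_norm_sq_psdSqrt_kronecker_one_mulVec [Fintype κ] {Λ : κ → Matrix β β ℂ}
    (hΛ : ∀ m, 0 ≤ Λ m) (hΛ1 : ∑ m, Λ m = 1) (v : β × r → ℂ) :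
    ∑ m, ∑ t, ‖((psdSqrt (Λ m) ⊗ₖ (1 : Matrix r r ℂ)) *ᵥ v) t‖ ^ 2 = ∑ t, ‖v t‖ ^ 2 := by
  have houtcome (m : κ) : localExpectation (Λ m) v =
      ((∑ t, ‖((psdSqrt (Λ m) ⊗ₖ (1 : Matrix r r ℂ)) *ᵥ v) t‖ ^ 2 : ℝ) : ℂ) := by
    rw [← localExpectation_conjTranspose_mul_self,
      (nonneg_iff_posSemidef.mp (psdSqrt_nonneg (hΛ m))).1.eq, psdSqrt_mul_self (hΛ m)]
  have htotal := localExpectation_sum Λ v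
  simp only [hΛ1, localExpectation_one, houtcome] at htotal
  exact_mod_cast htotal.symm

lemma sum_norm_sq_coherentMeasurement [Fintype α] [Fintype κ] {Λ : κ → Matrix β β ℂ}
    (hΛ : ∀ m, 0 ≤ Λ m) (hΛ1 : ∑ m, Λ m = 1) (ψ : α × β × r → ℂ) :
    ∑ t, ‖coherentMeasurement Λ ψ t‖ ^ 2 = ∑ t, ‖ψ t‖ ^ 2 := by
  rw [Fintype.sum_prod_type, Fintype.sum_prod_type]
  refine Finset.sum_congr rfl fun a _ => ?_
  rw [Fintype.sum_prod_type]
  exact sum_norm_sq_psdSqrt_kronecker_one_mulVec hΛ hΛ1 fun x => ψ (a, x)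

lemma coherentCopy_dotProduct_coherentMeasurement [Fintype α] [DecidableEq α]
    (Λ : α → Matrix β β ℂ) (ψ : α × β × r → ℂ) :
    star (coherentCopy ψ) ⬝ᵥ coherentMeasurement Λ ψ =
      ∑ z, localExpectation (psdSqrt (Λ z)) fun x => ψ (z, x) := by
  rw [dotProduct, Fintype.sum_prod_type]
  refine Finset.sum_congr rfl fun z _ => ?_
  rw [Fintype.sum_prod_type, Finset.sum_eq_single z]
  · simp [coherentCopy, coherentMeasurement, localExpectation, dotProduct]
  · intro m _ hm
    simp [coherentCopy, hm]
  · simp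

lemma sum_localExpectation_le_coherentCopy_dotProduct [Fintype α] [DecidableEq α]
    {Λ : α → Matrix β β ℂ} (hΛ : ∀ z, 0 ≤ Λ z) (hΛ1 : ∀ z, Λ z ≤ 1) (ψ : α × β × r → ℂ) :
    ∑ z, localExpectation (Λ z) (fun x => ψ (z, x)) ≤
      star (coherentCopy ψ) ⬝ᵥ coherentMeasurement Λ ψ := by
  rw [coherentCopy_dotProduct_coherentMeasurement]
  exact Finset.sum_le_sum fun z _ =>
    localExpectation_mono (le_psdSqrt_of_le_one (hΛ z) (hΛ1 z)) _

end CoherentMeasurement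

/-- Properties of the coherent measurement state ψ' and the ideal state ξ:
ψ' is a unit vector, ⟨ξ,ψ'⟩ = ∑_z p_z ⟨φ_z|(√Λ_z ⊗ 1_R)|φ_z⟩ is real, and it is at least
the guessing probability ∑_z p_z ⟨φ_z|(Λ_z ⊗ 1_R)|φ_z⟩. -/
theorem coherent_measurement_overlap {d : ℕ} (hd : 1 ≤ d)
    {β r : Type*} [Fintype β] [DecidableEq β] [Fintype r] [DecidableEq r]
    (p : Fin d → ℝ) (hp0 : ∀ z, 0 ≤ p z) (hp1 : ∑ z, p z = 1)
    (φ : Fin d → β × r → ℂ) (hφ : ∀ z, ∑ t, ‖φ z t‖ ^ 2 = 1)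
    (Λ : Fin d → Matrix β β ℂ)
    (hΛpos : ∀ z, (Λ z).PosSemidef) (hΛsum : ∑ z, Λ z = 1)
    (ψ' : Fin d × Fin d × β × r → ℂ)
    (hψ' : ∀ a m b s, ψ' (a, m, b, s)
        = (Real.sqrt (p a) : ℂ) * ∑ b', psdSqrt (Λ m) b b' * φ a (b', s))
    (ξ : Fin d × Fin d × β × r → ℂ)
    (hξ : ∀ a m b s, ξ (a, m, b, s)
        = (Real.sqrt (p a) : ℂ) * (if m = a then 1 else 0) * φ a (b, s)) :
    (∑ t, ‖ψ' t‖ ^ 2 = 1) ∧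
    ((∑ t, (starRingEnd ℂ) (ξ t) * ψ' t)
        = ∑ z, (p z : ℂ) *
            ∑ b, ∑ b', ∑ s, (starRingEnd ℂ) (φ z (b, s)) * psdSqrt (Λ z) b b' * φ z (b', s)) ∧
    ((∑ t, (starRingEnd ℂ) (ξ t) * ψ' t).im = 0) ∧
    ((∑ z, p z *
        (∑ b, ∑ b', ∑ s, (starRingEnd ℂ) (φ z (b, s)) * Λ z b b' * φ z (b', s)).re)
      ≤ (∑ t, (starRingEnd ℂ) (ξ t) * ψ' t).re) := by
  have hΛ (z) : 0 ≤ Λ z := nonneg_iff_posSemidef.mpr (hΛpos z)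
  have hΛ1 (z) : Λ z ≤ 1 :=
    hΛsum ▸ Finset.single_le_sum (fun m _ => hΛ m) (Finset.mem_univ z)
  obtain rfl : ψ' = coherentMeasurement Λ (coherentSuperposition p φ) := by
    ext ⟨a, m, b, s⟩
    rw [hψ', coherentMeasurement, kronecker_one_mulVec_apply, Finset.mul_sum]
    exact Finset.sum_congr rfl fun b' _ => mul_left_comm _ _ _
  obtain rfl : ξ = coherentCopy (coherentSuperposition p φ) := by
    ext ⟨a, m, b, s⟩
    simp [hξ, coherentCopy, coherentSuperposition]
  have hoverlap := coherentCopy_dotProduct_coherentMeasurement Λ (coherentSuperposition p φ)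
  have hguess := sum_localExpectation_le_coherentCopy_dotProduct hΛ hΛ1 (coherentSuperposition p φ)
  simp only [localExpectation_coherentSuperposition hp0] at hoverlap hguess
  have hnonneg : 0 ≤ ∑ z, (p z : ℂ) * localExpectation (Λ z) (φ z) := Finset.sum_nonneg fun z _ =>
    mul_nonneg (Complex.zero_le_real.mpr (hp0 z)) (localExpectation_nonneg (hΛ z) _)
  simp only [← localExpectation_eq_sum]
  refine ⟨?_, hoverlap, (Complex.le_def.mp (hnonneg.trans hguess)).2.symm, ?_⟩
  · simp [sum_norm_sq_coherentMeasurement hΛ hΛsum, sum_norm_sq_coherentSuperposition hp0, hφ, hp1]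
  · simp only [← Complex.re_ofReal_mul, ← Complex.re_sum]
    exact (Complex.le_def.mp hguess).1
end
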